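/- Let Γ = PSL(2, ℤ[ω]) and let Ω be a proper normal subgroup of Γ containing a nontrivial element of finite order. Then either Ω is the commutator subgroup of Γ (which has index 3), or Ω has index 12 in Γ and equals the kernel of the reduction homomorphism Γ → PSL(2, ℤ[ω]/𝔭), where 𝔭 is the prime ideal of ℤ[ω] generated by 2ω+1 = √(-3) (the unique prime above 3). -/

import Mathlib

/-- The Eisenstein integers `ℤ[ω]`, the ring of integers of `ℚ(ω)` with
`ω² + ω + 1 = 0`. -/
abbrev Eisenstein : Type := NumberField.RingOfIntegers (CyclotomicField 3 ℚ)

/-- `PSL(2,R)`: the quotient of `SL(2,R)` by its center. -/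
abbrev PSL2 (R : Type*) [CommRing R] : Type _ :=
  Matrix.SpecialLinearGroup (Fin 2) R ⧸
    Subgroup.center (Matrix.SpecialLinearGroup (Fin 2) R)

/-- Applying a ring homomorphism entrywise maps the center of `SL(2,R)` into
the center of `SL(2,S)`. -/
lemma center_le_comap_slMap {R S : Type*} [CommRing R] [CommRing S] (f : R →+* S) :
    Subgroup.center (Matrix.SpecialLinearGroup (Fin 2) R) ≤
      (Subgroup.center (Matrix.SpecialLinearGroup (Fin 2) S)).comap
        (Matrix.SpecialLinearGroup.map f) := by
  intro A hA
  rw [Subgroup.mem_comap, Matrix.SpecialLinearGroup.mem_center_iff]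
  obtain ⟨r, hr, hrA⟩ := Matrix.SpecialLinearGroup.mem_center_iff.mp hA
  refine ⟨f r, by rw [← map_pow, hr, map_one], ?_⟩
  ext i j
  simp [← hrA, Matrix.scalar_apply, Matrix.diagonal_apply]
  aesop

/-- The homomorphism `PSL(2,R) → PSL(2,S)` induced by applying a ring
homomorphism `f : R → S` entrywise. -/
def PSL2Map {R S : Type*} [CommRing R] [CommRing S] (f : R →+* S) :
    PSL2 R →* PSL2 S :=
  QuotientGroup.map _ _ (Matrix.SpecialLinearGroup.map f) (center_le_comap_slMap f)

/-!
A matrix of finite order in `SL(2, ℤ[ω])` has trace `2r` with `r` real and `|r| ≤ 1`. Since every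
complex number lies at distance less than `1 / √2` from `ℤ[ω]`, conjugating by a translation and
the inversion `S` makes the lower-left entry strictly smaller, as long as its norm is at least `2`.
So a nontrivial torsion element of `Ω` may be assumed to have lower-left entry `0` or a unit.
In both cases a commutator with a unit diagonal or unipotent matrix is a translation,
and `Ω` contains `T x` for all `x ∈ 𝔭`.

The quotient of `PSL(2, ℤ[ω])` by the normal closure of these `T x` is generated by `s` and `t` with
`s² = t³ = (st)³ = 1`, so it has order at most `12`, which is the order of `PSL(2, 𝔽₃)`: hence the
kernel of reduction modulo `𝔭` is contained in `Ω`. If `Ω` is strictly larger, its image in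
`PSL(2, 𝔽₃)` contains some `S * T z`, whence `Γ / Ω` is generated by the image of `T 1`, of order
dividing `3`. The same argument applies to the commutator subgroup of `Γ`, which therefore has
index dividing `3` as well.
-/

section GroupTheory

variable {G : Type*} [Group G]

lemma eq_commutator_of_index_prime {N : Subgroup G} [N.Normal] {p : ℕ} (hp : p.Prime)
    (hN : N.index = p) (hG : (commutator G).index ∣ p) : N = commutator G := by
  have : Fact p.Prime := ⟨hp⟩
  have : IsCyclic (G ⧸ N) := isCyclic_of_prime_card hN
  have hle : commutator G ≤ N :=
    Subgroup.Normal.quotient_commutative_iff_commutator_le.1 ⟨⟨IsCyclic.commGroup.mul_comm⟩⟩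
  refine le_antisymm (Subgroup.relIndex_eq_one.1 ?_) hle
  rw [← Subgroup.relIndex_mul_index hle, hN] at hG
  exact Nat.dvd_one.1 (Nat.dvd_of_mul_dvd_mul_right hp.pos (by simpa using hG))

lemma eq_one_or_eq_or_eq_inv_of_mem_zpowers {t p : G} (ht : t ^ 3 = 1)
    (hp : p ∈ Subgroup.zpowers t) : p = 1 ∨ p = t ∨ p = t⁻¹ := by
  classical
  have hfin : IsOfFinOrder t := isOfFinOrder_iff_pow_eq_one.2 ⟨3, by norm_num, ht⟩
  obtain ⟨n, hn, rfl⟩ := (hfin.mem_zpowers_iff_mem_range_orderOf).1 hp |> Finset.mem_image.1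
  have : n < 3 := (Finset.mem_range.1 hn).trans_le (orderOf_le_of_pow_eq_one (by norm_num) ht)
  interval_cases n
  · simp
  · simp
  · simp [eq_inv_iff_mul_eq_one, ← pow_succ, ht]

/-- Here `none` stands for the cell `P`, and `some x` for the coset `x s P` in the cell `P s P`. -/
lemma surjective_bruhat {P : Subgroup G} {s : G} (hs : s ^ 2 = 1)
    (hP : ∀ p ∈ P, p = 1 ∨ ∃ x y : P, s * p * s = x * s * y)
    (hgen : Subgroup.closure (insert s P) = ⊤) :
    Function.Surjective fun p : Option P × P ↦ p.1.elim (1 : G) (· * s) * p.2 := by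
  have hss : s * s = 1 := by rw [← pow_two, hs]
  have mul_P {g y : G} (hy : y ∈ P) :
      (∃ p : Option P × P, p.1.elim (1 : G) (· * s) * p.2 = g) →
        ∃ p : Option P × P, p.1.elim (1 : G) (· * s) * p.2 = g * y := by
    rintro ⟨⟨x, p⟩, rfl⟩
    exact ⟨⟨x, p * ⟨y, hy⟩⟩, (mul_assoc _ _ _).symm⟩
  have mul_s {g : G} :
      (∃ p : Option P × P, p.1.elim (1 : G) (· * s) * p.2 = g) →
        ∃ p : Option P × P, p.1.elim (1 : G) (· * s) * p.2 = g * s := by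
    rintro ⟨⟨_ | x, p⟩, rfl⟩
    · exact ⟨⟨some p, 1⟩, by simp⟩
    · obtain hp | ⟨a, b, h⟩ := hP p p.2
      · exact ⟨⟨none, x⟩, by simp [hp, mul_assoc, hss]⟩
      · exact ⟨⟨some (x * a), b⟩, by simpa [mul_assoc] using h.symm⟩
  intro g
  have hg : g ∈ Subgroup.closure (insert s P) := hgen ▸ Subgroup.mem_top g
  induction hg using Subgroup.closure_induction_right with
  | one => exact ⟨⟨none, 1⟩, by simp⟩
  | mul_right g _ y hy ih =>
    obtain rfl | hy := hy
    exacts [mul_s ih, mul_P hy ih]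
  | mul_inv_cancel g _ y hy ih =>
    obtain rfl | hy := hy
    · rw [inv_eq_of_mul_eq_one_left hss]; exact mul_s ih
    · exact mul_P (inv_mem hy) ih

/-- The hypotheses present `PSL(2, 𝔽₃)`, with `t` generating a Sylow `3`-subgroup. -/
lemma finite_and_natCard_le_twelve {s t : G} (hs : s ^ 2 = 1) (ht : t ^ 3 = 1)
    (hst : (s * t) ^ 3 = 1) (hgen : Subgroup.closure {s, t} = ⊤) :
    Finite G ∧ Nat.card G ≤ 12 := by
  set P := Subgroup.zpowers t
  have ht_mem : t ∈ P := Subgroup.mem_zpowers t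
  have hfin : IsOfFinOrder t := isOfFinOrder_iff_pow_eq_one.2 ⟨3, by norm_num, ht⟩
  have : Finite P := hfin.finite_zpowers
  have hcard : Nat.card P ≤ 3 := by
    rw [Nat.card_zpowers]
    exact orderOf_le_of_pow_eq_one (by norm_num) ht
  have hs' : s⁻¹ = s := inv_eq_of_mul_eq_one_left (by rw [← pow_two, hs])
  have hsts : s * t * s = t⁻¹ * s * t⁻¹ := by
    rw [← mul_inv_eq_one, ← hst]
    simp [pow_succ, hs', mul_assoc]
  have hsts' : s * t⁻¹ * s = t * s * t := by
    simpa [hs', mul_assoc] using congrArg (·⁻¹) hsts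
  have hsurj := surjective_bruhat (P := P) hs (fun p hp ↦ by
    obtain h | h | h := eq_one_or_eq_or_eq_inv_of_mem_zpowers ht hp
    exacts [.inl h, .inr ⟨⟨t⁻¹, inv_mem ht_mem⟩, ⟨t⁻¹, inv_mem ht_mem⟩, by rwa [h]⟩,
      .inr ⟨⟨t, ht_mem⟩, ⟨t, ht_mem⟩, by rwa [h]⟩]) <| by
    refine top_unique (hgen.symm.le.trans (Subgroup.closure_mono ?_))
    simp [Set.insert_subset_iff, ht_mem]
  refine ⟨Finite.of_surjective _ hsurj, (Nat.card_le_card_of_surjective _ hsurj).trans ?_⟩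
  rw [Nat.card_prod, Finite.card_option]
  exact Nat.mul_le_mul (by lia : _ ≤ 4) hcard

end GroupTheory

section EuclideanDomain

variable {R : Type*} [CommRing R] {σ : R →+* ℂ} {N : R → ℕ}

open Classical in
/-- The Euclidean structure on a subring of `ℂ` whose translates of the open unit disc cover `ℂ`
and on which the squared absolute value takes natural values: a quotient of `a` by `b` is
an element at distance less than `1` from `a / b`. -/
noncomputable abbrev euclideanDomainOfComplexEmbedding (hinj : Function.Injective σ)
    (hN : ∀ z, ‖σ z‖ ^ 2 = N z) (hσ : ∀ ζ : ℂ, ∃ l, ‖ζ - σ l‖ ^ 2 < 1) : EuclideanDomain R where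
  __ := ‹CommRing R›
  __ := σ.domain_nontrivial
  quotient a b := if b = 0 then 0 else (hσ (σ a / σ b)).choose
  remainder a b := a - b * if b = 0 then 0 else (hσ (σ a / σ b)).choose
  quotient_zero _ := if_pos rfl
  quotient_mul_add_remainder_eq _ _ := add_sub_cancel _ _
  r a b := N a < N b
  r_wellFounded := (measure N).wf
  remainder_lt a {b} hb := by
    have hb' : σ b ≠ 0 := (map_ne_zero_iff σ hinj).2 hb
    rw [if_neg hb, ← Nat.cast_lt (α := ℝ), ← hN, ← hN, map_sub, map_mul]
    nth_rw 1 [← mul_div_cancel₀ (σ a) hb']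
    rw [← mul_sub, norm_mul, mul_pow]
    exact mul_lt_of_lt_one_right (by positivity) (hσ (σ a / σ b)).choose_spec
  mul_left_not_lt a {b} hb := by
    have hb' : σ b ≠ 0 := (map_ne_zero_iff σ hinj).2 hb
    have hb1 : (1 : ℝ) ≤ N b := by
      rw [Nat.one_le_cast, Nat.one_le_iff_ne_zero, ← Nat.cast_ne_zero (R := ℝ), ← hN]
      positivity
    rw [not_lt, ← Nat.cast_le (α := ℝ), ← hN, ← hN, map_mul, norm_mul, mul_pow, hN b]
    exact le_mul_of_one_le_right (by positivity) hb1

end EuclideanDomain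

lemma exists_norm_sub_map_sq_lt {R : Type*} [CommRing R] (σ : R →+* ℂ) {ω : R}
    (hω : ω ^ 2 + ω + 1 = 0) (ζ : ℂ) : ∃ l, ‖ζ - σ l‖ ^ 2 < 1 / 2 := by
  have hs : σ ω ^ 2 + σ ω + 1 = 0 := by simpa using congrArg σ hω
  set s := σ ω
  have hs_re := congrArg Complex.re hs
  have hs_im := congrArg Complex.im hs
  simp only [pow_two, Complex.add_re, Complex.add_im, Complex.mul_re, Complex.mul_im,
    Complex.one_re, Complex.one_im, Complex.zero_re, Complex.zero_im] at hs_re hs_im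
  have him : s.im ≠ 0 := fun h ↦ by
    rw [h] at hs_re
    nlinarith [sq_nonneg (s.re + 1 / 2)]
  have hre : s.re = -1 / 2 := mul_left_cancel₀ him (by linarith)
  have him_sq : s.im ^ 2 = 3 / 4 := by
    rw [hre] at hs_re
    linarith
  set n := round (ζ.im / s.im)
  set m := round (ζ.re + n / 2)
  have hn : (ζ.im / s.im - n) ^ 2 ≤ (1 / 2) ^ 2 :=
    sq_le_sq.2 ((abs_sub_round _).trans (le_abs_self _))
  have hm : (ζ.re + n / 2 - m) ^ 2 ≤ (1 / 2) ^ 2 :=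
    sq_le_sq.2 ((abs_sub_round _).trans (le_abs_self _))
  refine ⟨m + n * ω, ?_⟩
  calc
    ‖ζ - σ (m + n * ω)‖ ^ 2 = (ζ.re + n / 2 - m) ^ 2 + (ζ.im - n * s.im) ^ 2 := by
      rw [← Complex.normSq_eq_norm_sq, Complex.normSq_apply, map_add, map_mul, map_intCast,
        map_intCast]
      simp only [Complex.sub_re, Complex.sub_im, Complex.add_re, Complex.add_im, Complex.mul_re,
        Complex.mul_im, Complex.intCast_re, Complex.intCast_im, zero_mul, sub_zero, add_zero,
        zero_add, hre, s]
      ring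
    _ = (ζ.re + n / 2 - m) ^ 2 + 3 / 4 * (ζ.im / s.im - n) ^ 2 := by
      rw [← him_sq]
      field_simp
    _ < 1 / 2 := by linarith

namespace PSL2

open Matrix MatrixGroups

section Elements

variable {R : Type*} [CommRing R]

/-- The matrix of the inversion `z ↦ -1 / z`. -/
def S : SL(2, R) := ⟨!![0, -1; 1, 0], by simp⟩

/-- The matrix of the translation `z ↦ z + x`. -/
def T (x : R) : SL(2, R) := ⟨!![1, x; 0, 1], by simp⟩

/-- The matrix of the scaling `z ↦ u² z` by the square of a unit. -/
def D (u : Rˣ) : SL(2, R) := ⟨!![↑u, 0; 0, ↑u⁻¹], by simp⟩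

@[simp]
lemma coe_S : ((S : SL(2, R)) : Matrix (Fin 2) (Fin 2) R) = !![0, -1; 1, 0] := rfl

@[simp]
lemma coe_T (x : R) : (T x : Matrix (Fin 2) (Fin 2) R) = !![1, x; 0, 1] := rfl

@[simp]
lemma coe_D (u : Rˣ) : (D u : Matrix (Fin 2) (Fin 2) R) = !![↑u, 0; 0, ↑u⁻¹] := rfl

lemma det_eq (g : SL(2, R)) : g 0 0 * g 1 1 - g 0 1 * g 1 0 = 1 := by
  rw [← det_fin_two, g.det_coe]

lemma T_zero : T (0 : R) = 1 := by
  ext i j; fin_cases i <;> fin_cases j <;> simp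

lemma T_add (x y : R) : T (x + y) = T x * T y := by
  ext i j; fin_cases i <;> fin_cases j <;> simp [add_comm]

lemma T_neg (x : R) : T (-x) = (T x)⁻¹ := by
  rw [eq_inv_iff_mul_eq_one, ← T_add, neg_add_cancel, T_zero]

lemma T_nsmul (n : ℕ) (x : R) : T (n • x) = T x ^ n := by
  induction n with
  | zero => rw [zero_smul, T_zero, pow_zero]
  | succ n ih => rw [succ_nsmul, T_add, ih, pow_succ]

lemma S_sq : (S : SL(2, R)) ^ 2 = -1 := by
  ext i j; fin_cases i <;> fin_cases j <;> simp [pow_two]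

lemma S_mul_T_one_pow_three : ((S : SL(2, R)) * T 1) ^ 3 = -1 := by
  ext i j; fin_cases i <;> fin_cases j <;> simp [pow_succ]

/-- Whitehead's lemma. -/
lemma D_eq (u : Rˣ) : D u = T (u : R) * S * T (↑u⁻¹ : R) * S⁻¹ * T (u : R) * S := by
  ext i j; fin_cases i <;> fin_cases j <;> simp

lemma T_conj_D_mul_T (u : Rˣ) (x y : R) :
    T y * (D u * T x) * (T y)⁻¹ * (D u * T x)⁻¹ = T ((1 - u ^ 2) * y) := by
  rw [mul_inv_eq_iff_eq_mul, mul_inv_eq_iff_eq_mul]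
  have h : u * x + y * ↑u⁻¹ = u * y + (u * x + (1 - u ^ 2) * y * ↑u⁻¹) := by
    linear_combination (y * u) * u.mul_inv
  ext i j; fin_cases i <;> fin_cases j
  exacts [by simp, by simpa using h, by simp, by simp]

lemma S_conj_commutator_D_S_mul_T (u : Rˣ) (z : R) :
    S⁻¹ * (D u⁻¹ * (S * T z) * (D u⁻¹)⁻¹ * (S * T z)⁻¹) * S =
      D (u ^ 2) * T ((↑u⁻¹ ^ 2 - 1) * z) := by
  have h : u * z * ↑u⁻¹ + -(u ^ 2 * z) = u ^ 2 * ((↑u⁻¹ ^ 2 - 1) * z) := by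
    linear_combination (-(u * z * ↑u⁻¹)) * u.mul_inv
  ext i j; fin_cases i <;> fin_cases j
  exacts [by simp [pow_two], by simpa [pow_two] using h, by simp, by simp [pow_two]]

/-- The conjugator has rows `r` and `-r g` for `r = (0, y)`. -/
lemma exists_conj_eq_S_mul_T {g : SL(2, R)} {y : R} (h : g 1 0 * y ^ 2 = 1) :
    ∃ p : SL(2, R), p * g * p⁻¹ = S * T (g 0 0 + g 1 1) := by
  obtain ⟨p, hp⟩ : ∃ p : SL(2, R), (p : Matrix _ _ R) = !![0, y; -(y * g 1 0), -(y * g 1 1)] :=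
    ⟨⟨_, by rw [det_fin_two_of]; linear_combination h⟩, rfl⟩
  refine ⟨p, mul_inv_eq_iff_eq_mul.2 ?_⟩
  have h10 : -(y * g 1 0 * g 0 0) + -(y * g 1 1 * g 1 0) =
      -((g 0 0 + g 1 1) * (y * g 1 0)) := by ring
  have h11 : -(y * g 1 0 * g 0 1) + -(y * g 1 1 * g 1 1) =
      y + -((g 0 0 + g 1 1) * (y * g 1 1)) := by linear_combination y * det_eq g
  ext i j; fin_cases i <;> fin_cases j <;>
    simp [hp, mul_apply, Fin.sum_univ_two, h10, h11]

lemma S_mul_T_mul_lowerLeft (l : R) (g : SL(2, R)) :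
    (S * T l * g : SL(2, R)) 1 0 = g 0 0 + l * g 1 0 := by
  simp [mul_apply, Fin.sum_univ_two]

lemma S_mul_T_conj_lowerLeft (l : R) (g : SL(2, R)) :
    (S * T l * g * (S * T l)⁻¹ : SL(2, R)) 1 0 = (g 0 0 + l * g 1 0) * l - (g 0 1 + l * g 1 1) := by
  simp [mul_apply, vecMul, dotProduct, Fin.sum_univ_two, sub_eq_add_neg]

lemma mem_center_iff {g : SL(2, R)} :
    g ∈ Subgroup.center SL(2, R) ↔ g 0 1 = 0 ∧ g 1 0 = 0 ∧ g 0 0 = g 1 1 := by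
  rw [Matrix.SpecialLinearGroup.mem_center_iff]
  constructor
  · rintro ⟨r, -, h⟩
    simp [← h]
  · rintro ⟨h01, h10, h⟩
    refine ⟨g 1 1, ?_, ?_⟩
    · simpa [h01, h, pow_two] using det_eq g
    · ext i j
      fin_cases i <;> fin_cases j <;> simp [h01, h10, h]

lemma neg_one_mem_center : (-1 : SL(2, R)) ∈ Subgroup.center SL(2, R) := by
  simp [mem_center_iff]

@[simp]
lemma mk_neg (g : SL(2, R)) : ((-g : SL(2, R)) : PSL2 R) = g := by
  rw [QuotientGroup.eq]
  simpa using neg_one_mem_center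

lemma mk_S_sq : ((S : SL(2, R)) : PSL2 R) ^ 2 = 1 := by
  rw [← QuotientGroup.mk_pow, S_sq, mk_neg, QuotientGroup.mk_one]

lemma mk_S_mul_mk_T_one_pow_three : (((S : SL(2, R)) : PSL2 R) * (T (1 : R) : PSL2 R)) ^ 3 = 1 := by
  rw [← QuotientGroup.mk_mul, ← QuotientGroup.mk_pow, S_mul_T_one_pow_three, mk_neg,
    QuotientGroup.mk_one]

end Elements

section NormalSubgroups

variable {R : Type*} [CommRing R] {N : Subgroup SL(2, R)} [N.Normal]

lemma T_mem_of_D_mul_T_mem {u : Rˣ} {x : R} (h : D u * T x ∈ N) (y : R) :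
    T ((1 - u ^ 2) * y) ∈ N := by
  rw [← T_conj_D_mul_T u x y]
  exact N.mul_mem (Subgroup.Normal.conj_mem ‹_› _ h _) (N.inv_mem h)

lemma T_mem_of_S_mul_T_mem {z : R} (h : S * T z ∈ N) (u : Rˣ) (y : R) :
    T ((1 - u ^ 4) * y) ∈ N := by
  have hD : D (u ^ 2) * T ((↑u⁻¹ ^ 2 - 1) * z) ∈ N := by
    rw [← S_conj_commutator_D_S_mul_T u z]
    simpa using Subgroup.Normal.conj_mem ‹N.Normal› _
      (N.mul_mem (Subgroup.Normal.conj_mem ‹_› _ h (D u⁻¹)) (N.inv_mem h)) S⁻¹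
  simpa [← pow_mul] using T_mem_of_D_mul_T_mem hD y

lemma exists_mem_lowerLeft_ne_zero (h : ¬ N ≤ Subgroup.center SL(2, R)) :
    ∃ g ∈ N, g 1 0 ≠ 0 := by
  by_contra! h10
  refine h fun g hg ↦ ?_
  have h01 {g : SL(2, R)} (hg : g ∈ N) : g 0 1 = 0 := by
    simpa [mul_apply, vecMul, dotProduct, Fin.sum_univ_two] using
      h10 _ (Subgroup.Normal.conj_mem ‹_› g hg S)
  have hT : -g 0 0 + g 1 1 = 0 := by
    simpa [mul_apply, vecMul, dotProduct, Fin.sum_univ_two, h01 hg, h10 g hg] using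
      h01 (Subgroup.Normal.conj_mem ‹_› g hg (T 1))
  exact mem_center_iff.2 ⟨h01 hg, h10 g hg, neg_add_eq_zero.1 hT⟩

lemma exists_S_mul_T_mem (hN : -1 ∈ N) (hR : ∀ u : Rˣ, IsSquare u ∨ IsSquare (-u)) {g : SL(2, R)}
    (hg : g ∈ N) (hu : IsUnit (g 1 0)) : ∃ z, S * T z ∈ N := by
  suffices ∀ g ∈ N, ∀ v : Rˣ, g 1 0 = v * v → ∃ z, S * T z ∈ N by
    obtain ⟨u, hu⟩ := hu
    obtain ⟨v, hv⟩ | ⟨v, hv⟩ := hR u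
    · exact this g hg v (by rw [← hu, hv, Units.val_mul])
    · refine this (-g) ?_ v ?_
      · rw [← neg_one_mul]; exact N.mul_mem hN hg
      · rw [SpecialLinearGroup.coe_neg, neg_apply, ← hu, ← Units.val_neg, hv, Units.val_mul]
  intro g hg v hv
  obtain ⟨p, hp⟩ := exists_conj_eq_S_mul_T (g := g) (y := ↑v⁻¹) (by simp [hv, pow_two, mul_assoc])
  exact ⟨_, hp ▸ Subgroup.Normal.conj_mem ‹_› g hg p⟩

end NormalSubgroups

section Generation

lemma exists_eq_D_mul_T {R : Type*} [CommRing R] {g : SL(2, R)} (h : g 1 0 = 0) :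
    ∃ u x, g = D u * T x := by
  have hd := det_eq g
  rw [h, mul_zero, sub_zero] at hd
  refine ⟨⟨g 0 0, g 1 1, hd, by rwa [mul_comm]⟩, g 1 1 * g 0 1, ?_⟩
  ext i j; fin_cases i <;> fin_cases j <;> simp [h, ← mul_assoc, hd]

variable {R : Type*} [EuclideanDomain R]

lemma eq_top_of_S_mem_of_T_mem {H : Subgroup SL(2, R)} (hS : S ∈ H) (hT : ∀ x, T x ∈ H) :
    H = ⊤ := by
  refine (Subgroup.eq_top_iff' H).2 fun g ↦ ?_
  induction hc : g 1 0 using (EuclideanDomain.r_wellFounded (R := R)).induction generalizing g with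
  | _ c ih =>
  by_cases hc0 : c = 0
  · obtain ⟨u, x, rfl⟩ := exists_eq_D_mul_T (hc.trans hc0)
    rw [D_eq]
    have hS' := inv_mem hS
    exact mul_mem (mul_mem (mul_mem (mul_mem (mul_mem (mul_mem (hT _) hS) (hT _)) hS')
      (hT _)) hS) (hT _)
  · have h : S * T (-(g 0 0 / c)) * g ∈ H := by
      refine ih (g 0 0 % c) (EuclideanDomain.mod_lt _ hc0) _ ?_
      rw [S_mul_T_mul_lowerLeft, hc, EuclideanDomain.mod_eq_sub_mul_div]
      ring
    exact (H.mul_mem_cancel_left (H.mul_mem hS (hT _))).1 h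

lemma eq_top_of_mk_S_mem_of_mk_T_mem {H : Subgroup (PSL2 R)}
    (hS : ((S : SL(2, R)) : PSL2 R) ∈ H) (hT : ∀ x : R, (T x : PSL2 R) ∈ H) : H = ⊤ := by
  have h := eq_top_of_S_mem_of_T_mem (H := H.comap (QuotientGroup.mk' _)) hS hT
  exact Subgroup.comap_injective (QuotientGroup.mk'_surjective _)
    (h.trans (Subgroup.comap_top _).symm)

end Generation

section Reduction

variable {R F : Type*} [CommRing R]

lemma map_S [CommRing F] (f : R →+* F) : PSL2Map f (S : SL(2, R)) = (S : SL(2, F)) := by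
  refine congrArg QuotientGroup.mk ?_
  ext i j; fin_cases i <;> fin_cases j <;> simp

lemma map_T [CommRing F] (f : R →+* F) (x : R) : PSL2Map f (T x) = T (f x) := by
  refine congrArg QuotientGroup.mk ?_
  ext i j; fin_cases i <;> fin_cases j <;> simp

lemma map_surjective [EuclideanDomain F] {f : R →+* F} (hf : Function.Surjective f) :
    Function.Surjective (PSL2Map f) := by
  refine MonoidHom.range_eq_top.1 (eq_top_of_mk_S_mem_of_mk_T_mem ⟨_, map_S f⟩ fun y ↦ ?_)
  obtain ⟨x, rfl⟩ := hf y
  exact ⟨_, map_T f x⟩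

lemma mk_mem_ker_map_iff [CommRing F] {f : R →+* F} {g : SL(2, R)} :
    (g : PSL2 R) ∈ (PSL2Map f).ker ↔
      g 0 1 ∈ RingHom.ker f ∧ g 1 0 ∈ RingHom.ker f ∧ g 0 0 - g 1 1 ∈ RingHom.ker f := by
  rw [MonoidHom.mem_ker, PSL2Map, QuotientGroup.map_mk, QuotientGroup.eq_one_iff, mem_center_iff]
  simp [sub_eq_zero]

lemma ker_map_congr {F' : Type*} [CommRing F] [CommRing F'] {f : R →+* F} {f' : R →+* F'}
    (h : RingHom.ker f = RingHom.ker f') : (PSL2Map f).ker = (PSL2Map f').ker := by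
  ext x
  obtain ⟨g, rfl⟩ := QuotientGroup.mk_surjective x
  simp only [mk_mem_ker_map_iff, h]

lemma exists_mk_S_mul_T_mem [Field F] {f : R →+* F} (hf : Function.Surjective f)
    (hF : ∀ u : Fˣ, IsSquare u ∨ IsSquare (-u)) {Ω : Subgroup (PSL2 R)} [Ω.Normal]
    (hle : (PSL2Map f).ker ≤ Ω) (hne : Ω ≠ (PSL2Map f).ker) :
    ∃ z : R, ((S * T z : SL(2, R)) : PSL2 R) ∈ Ω := by
  set N : Subgroup SL(2, F) := (Ω.map (PSL2Map f)).comap (QuotientGroup.mk' _)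
  have : (Ω.map (PSL2Map f)).Normal := .map ‹_› _ (map_surjective hf)
  have hN : ¬ N ≤ Subgroup.center SL(2, F) := by
    refine fun hN ↦ hne (le_antisymm (fun x hx ↦ ?_) hle)
    obtain ⟨g, hg⟩ := QuotientGroup.mk_surjective (PSL2Map f x)
    rw [MonoidHom.mem_ker, ← hg, QuotientGroup.eq_one_iff]
    exact hN ⟨x, hx, hg.symm⟩
  have hneg : -1 ∈ N := ⟨1, one_mem _, by simp⟩
  obtain ⟨g, hg, hg0⟩ := exists_mem_lowerLeft_ne_zero hN
  obtain ⟨z, hz⟩ := exists_S_mul_T_mem hneg hF hg hg0.isUnit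
  obtain ⟨z, rfl⟩ := hf z
  refine ⟨z, ?_⟩
  rw [← Subgroup.comap_map_eq_self hle, Subgroup.mem_comap, QuotientGroup.mk_mul, map_mul, map_S,
    map_T]
  exact hz

lemma natCard_zmod_three : Nat.card (PSL2 (ZMod 3)) = 12 := by
  have hSL : Nat.card SL(2, ZMod 3) = 24 := by
    rw [Nat.card_eq_fintype_card]
    decide +kernel
  have hcenter : Nat.card (Subgroup.center SL(2, ZMod 3)) = 2 := by
    rw [Nat.card_congr Matrix.SpecialLinearGroup.center_equiv_rootsOfUnity.toEquiv]
    have : Fact (Nat.Prime 3) := ⟨Nat.prime_three⟩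
    exact (IsPrimitiveRoot.neg_one 3 (by norm_num)).card_rootsOfUnity
  have h := (Subgroup.center SL(2, ZMod 3)).card_mul_index
  rw [hSL, hcenter, Subgroup.index] at h
  lia

lemma index_ker_map_zmod_three (f : R →+* ZMod 3) : (PSL2Map f).ker.index = 12 := by
  have : Fact (Nat.Prime 3) := ⟨Nat.prime_three⟩
  rw [Subgroup.index_ker, MonoidHom.range_eq_top.2 (map_surjective (ZMod.ringHom_surjective f)),
    Subgroup.card_top, natCard_zmod_three]

end Reduction

section Level

variable {R : Type*} [CommRing R] {f : R →+* ZMod 3} {Ω : Subgroup (PSL2 R)} [Ω.Normal]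

lemma three_mem_ker (f : R →+* ZMod 3) : (3 : R) ∈ RingHom.ker f := by
  rw [RingHom.mem_ker, map_ofNat]
  rfl

lemma mk_T_one_pow_three (hT : ∀ x ∈ RingHom.ker f, (T x : PSL2 R) ∈ Ω) :
    (((T (1 : R) : PSL2 R) : PSL2 R ⧸ Ω)) ^ 3 = 1 := by
  rw [← QuotientGroup.mk_pow, QuotientGroup.eq_one_iff, ← QuotientGroup.mk_pow, ← T_nsmul]
  exact hT _ (by simpa using three_mem_ker f)

lemma mk_T_mem_zpowers (hT : ∀ x ∈ RingHom.ker f, (T x : PSL2 R) ∈ Ω) (x : R) :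
    ((T x : PSL2 R) : PSL2 R ⧸ Ω) ∈ Subgroup.zpowers ((T (1 : R) : PSL2 R) : PSL2 R ⧸ Ω) := by
  set n := (f x).val
  have hker : x - n • (1 : R) ∈ RingHom.ker f := by simp [n, RingHom.mem_ker]
  refine ⟨n, (zpow_natCast _ _).trans ?_⟩
  rw [← QuotientGroup.mk_pow, ← QuotientGroup.mk_pow, ← T_nsmul]
  refine QuotientGroup.eq.2 ?_
  rw [← QuotientGroup.mk_inv, ← QuotientGroup.mk_mul, ← T_neg, ← T_add, neg_add_eq_sub]
  exact hT _ hker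

end Level

section EuclideanLevel

variable {R : Type*} [EuclideanDomain R] {f : R →+* ZMod 3} {Ω : Subgroup (PSL2 R)} [Ω.Normal]

lemma eq_top_of_mk_S_mem_of_mk_T_one_mem (hT : ∀ x ∈ RingHom.ker f, (T x : PSL2 R) ∈ Ω)
    {H : Subgroup (PSL2 R ⧸ Ω)} (hS : (((S : SL(2, R)) : PSL2 R) : PSL2 R ⧸ Ω) ∈ H)
    (hT1 : ((T (1 : R) : PSL2 R) : PSL2 R ⧸ Ω) ∈ H) : H = ⊤ := by
  have h : H.comap (QuotientGroup.mk' Ω) = ⊤ := eq_top_of_mk_S_mem_of_mk_T_mem hS fun x ↦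
    Subgroup.zpowers_le_of_mem hT1 (mk_T_mem_zpowers hT x)
  exact Subgroup.comap_injective (QuotientGroup.mk'_surjective _)
    (h.trans (Subgroup.comap_top _).symm)

lemma index_ne_zero_and_index_le_twelve (hT : ∀ x ∈ RingHom.ker f, (T x : PSL2 R) ∈ Ω) :
    Ω.index ≠ 0 ∧ Ω.index ≤ 12 := by
  obtain ⟨hfin, hcard⟩ := finite_and_natCard_le_twelve
    (s := (((S : SL(2, R)) : PSL2 R) : PSL2 R ⧸ Ω)) (t := ((T (1 : R) : PSL2 R) : PSL2 R ⧸ Ω))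
    (by rw [← QuotientGroup.mk_pow, mk_S_sq, QuotientGroup.mk_one]) (mk_T_one_pow_three hT)
    (by rw [← QuotientGroup.mk_mul, ← QuotientGroup.mk_pow, mk_S_mul_mk_T_one_pow_three,
      QuotientGroup.mk_one])
    (eq_top_of_mk_S_mem_of_mk_T_one_mem hT (Subgroup.subset_closure (by simp))
      (Subgroup.subset_closure (by simp)))
  exact ⟨Nat.card_pos.ne', hcard⟩

lemma ker_map_le (hT : ∀ x ∈ RingHom.ker f, (T x : PSL2 R) ∈ Ω) : (PSL2Map f).ker ≤ Ω := by
  set K := (PSL2Map f).ker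
  have hT' : ∀ x ∈ RingHom.ker f, (T x : PSL2 R) ∈ Ω ⊓ K := fun x hx ↦
    ⟨hT x hx, mk_mem_ker_map_iff.2 (by simpa using hx)⟩
  obtain ⟨h0, h12⟩ := index_ne_zero_and_index_le_twelve hT'
  rw [← Subgroup.relIndex_mul_index (inf_le_right : Ω ⊓ K ≤ K), index_ker_map_zmod_three] at h0 h12
  have : (Ω ⊓ K).relIndex K = 1 := by lia
  exact (Subgroup.relIndex_eq_one.1 this).trans inf_le_left

lemma index_dvd_three (hT : ∀ x ∈ RingHom.ker f, (T x : PSL2 R) ∈ Ω) {z : R}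
    (hz : ((S * T z : SL(2, R)) : PSL2 R) ∈ Ω) : Ω.index ∣ 3 := by
  have hS : (((S : SL(2, R)) : PSL2 R) : PSL2 R ⧸ Ω) = ((T z : PSL2 R) : PSL2 R ⧸ Ω)⁻¹ := by
    rwa [eq_inv_iff_mul_eq_one, ← QuotientGroup.mk_mul, QuotientGroup.eq_one_iff]
  have htop := eq_top_of_mk_S_mem_of_mk_T_one_mem hT
    (H := Subgroup.zpowers ((T (1 : R) : PSL2 R) : PSL2 R ⧸ Ω))
    (hS ▸ inv_mem (mk_T_mem_zpowers hT z)) (Subgroup.mem_zpowers _)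
  rw [Subgroup.index, ← Subgroup.card_top, ← htop, Nat.card_zpowers]
  exact orderOf_dvd_of_pow_eq_one (mk_T_one_pow_three hT)

end EuclideanLevel

section Commutator

variable {R : Type*} [CommRing R]

lemma mk_T_mem_commutator (u : Rˣ) (y : R) :
    (T ((1 - u ^ 2) * y) : PSL2 R) ∈ commutator (PSL2 R) := by
  rw [← T_conj_D_mul_T u 0 y, T_zero, mul_one]
  exact Subgroup.commutator_mem_commutator (Subgroup.mem_top (T y : PSL2 R))
    (Subgroup.mem_top (D u : PSL2 R))

lemma mk_S_mem_commutator (hT : (T (3 : R) : PSL2 R) ∈ commutator (PSL2 R)) :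
    ((S : SL(2, R)) : PSL2 R) ∈ commutator (PSL2 R) := by
  set s : Abelianization (PSL2 R) := .of ((S : SL(2, R)) : PSL2 R) with hs
  set t : Abelianization (PSL2 R) := .of (T (1 : R) : PSL2 R) with ht
  have hs2 : s ^ 2 = 1 := by rw [hs, ← map_pow, mk_S_sq, map_one]
  have ht3 : t ^ 3 = 1 := by
    rw [ht, ← map_pow, ← QuotientGroup.mk_pow, ← T_nsmul]
    exact (QuotientGroup.eq_one_iff _).2 (by simpa using hT)
  have hst : (s * t) ^ 3 = 1 := by
    rw [hs, ht, ← map_mul, ← map_pow, mk_S_mul_mk_T_one_pow_three, map_one]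
  rw [mul_pow, ht3, mul_one, pow_succ, hs2, one_mul] at hst
  exact (QuotientGroup.eq_one_iff _).1 hst

end Commutator

section Descent

variable {R : Type*} [CommRing R] {σ : R →+* ℂ}

/-- The trace is `z + z⁻¹ = 2 re z` for an eigenvalue `z`, which is a root of unity. -/
lemma exists_trace_eq_two_mul_ofReal {A : SL(2, ℂ)} (hA : IsOfFinOrder A) :
    ∃ r : ℝ, A 0 0 + A 1 1 = 2 * r ∧ |r| ≤ 1 := by
  obtain ⟨z, hz⟩ := spectrum.nonempty_of_isAlgClosed_of_finiteDimensional ℂ A.1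
  obtain ⟨n, hn, hAn⟩ := isOfFinOrder_iff_pow_eq_one.1 hA
  have hzn : z ^ n = 1 := by
    have h := spectrum.pow_mem_pow A.1 n hz
    rwa [← Matrix.SpecialLinearGroup.coe_pow, hAn, Matrix.SpecialLinearGroup.coe_one,
      spectrum.one_eq] at h
  have hnorm : ‖z‖ = 1 := Complex.norm_eq_one_of_pow_eq_one hzn hn.ne'
  have hchar : (A 0 0 + A 1 1 - z) * z = 1 := by
    have h := Matrix.mem_spectrum_iff_isRoot_charpoly.1 hz
    rw [Polynomial.IsRoot, charpoly_fin_two, A.det_coe, trace_fin_two] at h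
    simp only [Polynomial.eval_add, Polynomial.eval_sub, Polynomial.eval_mul, Polynomial.eval_pow,
      Polynomial.eval_X, Polynomial.eval_C] at h
    linear_combination -h
  refine ⟨z.re, ?_, hnorm ▸ Complex.abs_re_le_norm z⟩
  have h2re := Complex.add_conj z
  rw [← Complex.inv_eq_conj hnorm, ← eq_inv_of_mul_eq_one_left hchar] at h2re
  push_cast at h2re
  linear_combination h2re

/-- Translate `g` so that its upper-left entry is close to half of its trace, then invert. -/
lemma exists_isConj_norm_lowerLeft_lt (hσ : ∀ ζ : ℂ, ∃ l, ‖ζ - σ l‖ ^ 2 < 1 / 2) {g : SL(2, R)}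
    (hg : IsOfFinOrder g) (hc : 2 ≤ ‖σ (g 1 0)‖ ^ 2) :
    ∃ h, IsConj g h ∧ ‖σ (h 1 0)‖ < ‖σ (g 1 0)‖ := by
  have hc0 : σ (g 1 0) ≠ 0 := fun h ↦ by norm_num [h] at hc
  obtain ⟨r, htr, hr⟩ := exists_trace_eq_two_mul_ofReal
    ((Matrix.SpecialLinearGroup.map σ).isOfFinOrder hg)
  have hdet := congrArg σ (det_eq g)
  simp only [Matrix.SpecialLinearGroup.map_apply_coe, RingHom.mapMatrix_apply, map_apply] at htr
  simp only [map_sub, map_mul, map_one] at hdet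
  obtain ⟨l, hl⟩ := hσ ((r - σ (g 0 0)) / σ (g 1 0))
  refine ⟨_, isConj_iff.2 ⟨S * T l, rfl⟩, lt_of_mul_lt_mul_right ?_ (norm_nonneg (σ (g 1 0)))⟩
  rw [S_mul_T_conj_lowerLeft]
  set e := σ (g 1 0) * ((r - σ (g 0 0)) / σ (g 1 0) - σ l) with he
  have he_norm : ‖e‖ ^ 2 < ‖σ (g 1 0)‖ ^ 2 / 2 := by
    rw [he, norm_mul, mul_pow]
    nlinarith
  have he_eq : e = r - σ (g 0 0) - σ (g 1 0) * σ l := by rw [he, mul_sub, mul_div_cancel₀ _ hc0]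
  have hr_norm : ‖(1 - r ^ 2 : ℂ)‖ ≤ 1 := by
    rw [← Complex.ofReal_pow, ← Complex.ofReal_one, ← Complex.ofReal_sub, Complex.norm_real,
      Real.norm_eq_abs, abs_le]
    have := (sq_le_one_iff_abs_le_one r).2 hr
    constructor <;> nlinarith
  calc
    _ = ‖e ^ 2 + (1 - r ^ 2)‖ := by
      rw [← norm_mul, he_eq]
      congr 1
      simp only [map_sub, map_add, map_mul]
      linear_combination hdet - (σ (g 0 0) + σ (g 1 0) * σ l) * htr
    _ ≤ ‖e‖ ^ 2 + 1 := (norm_add_le _ _).trans (by rw [norm_pow]; gcongr)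
    _ < ‖σ (g 1 0)‖ * ‖σ (g 1 0)‖ := by nlinarith

lemma exists_isConj_lowerLeft_lt_two {N : R → ℕ} (hN : ∀ z, ‖σ z‖ ^ 2 = N z)
    (hσ : ∀ ζ : ℂ, ∃ l, ‖ζ - σ l‖ ^ 2 < 1 / 2) {g : SL(2, R)} (hg : IsOfFinOrder g) :
    ∃ h, IsConj g h ∧ N (h 1 0) < 2 := by
  induction hn : N (g 1 0) using Nat.strong_induction_on generalizing g with
  | _ n ih =>
  obtain hn2 | hn2 := lt_or_ge n 2
  · exact ⟨g, .refl g, hn ▸ hn2⟩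
  · obtain ⟨h, hgh, hlt⟩ := exists_isConj_norm_lowerLeft_lt hσ hg
      (by rw [hN, hn]; exact_mod_cast hn2)
    have hlt' : N (h 1 0) < n := by
      rw [← hn, ← Nat.cast_lt (α := ℝ), ← hN, ← hN]
      gcongr
    obtain ⟨k, hhk, hk⟩ := ih _ hlt' (hgh.isOfFinOrder hg) rfl
    exact ⟨k, hgh.trans hhk, hk⟩

end Descent

section FiniteOrder

variable {R : Type*} [CommRing R]

lemma sq_eq_one_of_mem_center {g : SL(2, R)} (hg : g ∈ Subgroup.center SL(2, R)) : g ^ 2 = 1 := by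
  obtain ⟨h01, h10, h⟩ := mem_center_iff.1 hg
  have hdet := det_eq g
  rw [h01, zero_mul, sub_zero, h] at hdet
  ext i j; fin_cases i <;> fin_cases j <;>
    simp [pow_two, mul_apply, Fin.sum_univ_two, h01, h10, h, hdet]

lemma isOfFinOrder_of_mk {g : SL(2, R)} (hg : IsOfFinOrder (g : PSL2 R)) : IsOfFinOrder g := by
  obtain ⟨n, hn, h⟩ := isOfFinOrder_iff_pow_eq_one.1 hg
  rw [← QuotientGroup.mk_pow, QuotientGroup.eq_one_iff] at h
  exact isOfFinOrder_iff_pow_eq_one.2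
    ⟨n * 2, by lia, by rw [pow_mul, sq_eq_one_of_mem_center h]⟩

lemma D_mem_center {u : Rˣ} (hu : u ^ 2 = 1) : D u ∈ Subgroup.center SL(2, R) := by
  have : u = u⁻¹ := eq_inv_of_mul_eq_one_left (by rw [← pow_two, hu])
  simpa [mem_center_iff] using congrArg Units.val this

lemma eq_zero_of_isOfFinOrder_D_mul_T [IsDomain R] [CharZero R] {u : Rˣ} (hu : u ^ 2 = 1) {x : R}
    (h : IsOfFinOrder (D u * T x)) : x = 0 := by
  have hsq : (D u * T x) ^ 2 = T (2 * x) := by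
    have hD := D_mem_center hu
    have hcomm : Commute (D u) (T x) := (Subgroup.mem_center_iff.1 hD (T x)).symm
    rw [hcomm.mul_pow, sq_eq_one_of_mem_center hD, one_mul, ← T_nsmul, two_nsmul, two_mul]
  obtain ⟨n, hn, h⟩ := isOfFinOrder_iff_pow_eq_one.1 (h.pow (n := 2))
  rw [hsq, ← T_nsmul] at h
  have : n • (2 * x) = 0 := by simpa using congrArg (fun g : SL(2, R) ↦ g 0 1) h
  simpa [hn.ne'] using this

end FiniteOrder

end PSL2

namespace Eisenstein

open PSL2 MatrixGroups

instance : IsCyclotomicExtension {3} ℚ (CyclotomicField 3 ℚ) :=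
  have : NeZero ((3 : ℕ) : ℚ) := ⟨by norm_num⟩
  CyclotomicField.isCyclotomicExtension 3 ℚ

variable {ω : Eisenstein}

lemma norm_sq_eq_absNorm (φ : CyclotomicField 3 ℚ →+* ℂ) (z : Eisenstein) :
    ‖φ z‖ ^ 2 = Ideal.absNorm (Ideal.span {z}) := by
  have hprod := NumberField.InfinitePlace.prod_eq_abs_norm (z : CyclotomicField 3 ℚ)
  have hcard : Fintype.card (NumberField.InfinitePlace (CyclotomicField 3 ℚ)) = 1 := by
    rw [NumberField.InfinitePlace.card_eq_nrRealPlaces_add_nrComplexPlaces,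
      IsCyclotomicExtension.Rat.nrRealPlaces_eq_zero (n := 3) _ (by decide),
      IsCyclotomicExtension.Rat.nrComplexPlaces_eq_totient_div_two (n := 3)]
    rfl
  have := Fintype.card_le_one_iff_subsingleton.1 hcard.le
  have := IsCyclotomicExtension.Rat.isTotallyComplex (n := 3) (CyclotomicField 3 ℚ) (by decide)
  rw [Fintype.prod_subsingleton _ (NumberField.InfinitePlace.mk φ),
    NumberField.IsTotallyComplex.mult_eq, NumberField.InfinitePlace.apply] at hprod
  rw [hprod, Ideal.absNorm_span_singleton, ← Algebra.coe_norm_int]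
  simp

lemma unit_pow_three_eq (u : Eisensteinˣ) : u ^ 3 = 1 ∨ u ^ 3 = -1 := by
  have hζ := IsCyclotomicExtension.zeta_spec 3 ℚ (CyclotomicField 3 ℚ)
  have hmem := IsCyclotomicExtension.Rat.Three.Units.mem hζ u
  set η := (hζ.toInteger_isPrimitiveRoot.isUnit three_ne_zero).unit
  have hη : η ^ 3 = 1 := Units.ext hζ.toInteger_cube_eq_one
  have hη' : (η ^ 2) ^ 3 = 1 := by rw [← pow_mul, mul_comm, pow_mul, hη, one_pow]
  have hodd : Odd 3 := by decide
  simp only [List.mem_cons, List.not_mem_nil, or_false] at hmem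
  rcases hmem with rfl | rfl | rfl | rfl | rfl | rfl <;> simp [hodd.neg_pow, hη, hη']

lemma isSquare_or_isSquare_neg (u : Eisensteinˣ) : IsSquare u ∨ IsSquare (-u) := by
  obtain h | h := unit_pow_three_eq u
  · exact .inl ⟨u ^ 2, by rw [← pow_add, pow_succ, h, one_mul]⟩
  · exact .inr ⟨u ^ 2, by rw [← pow_add, pow_succ, h, neg_one_mul]⟩

lemma unit_sq_pow_three (u : Eisensteinˣ) : (u ^ 2) ^ 3 = 1 := by
  rw [← pow_mul, mul_comm, pow_mul]
  obtain h | h := unit_pow_three_eq u <;> simp [h]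

lemma one_sub_unit_sq_dvd (hω : ω ^ 2 + ω + 1 = 0) {u : Eisensteinˣ} (hu : u ^ 2 ≠ 1) :
    (1 - u ^ 2 : Eisenstein) ∣ 2 * ω + 1 := by
  have hcube : ((u ^ 2) ^ 3 : Eisenstein) = 1 := congrArg Units.val (unit_sq_pow_three u)
  have hu' : (u ^ 2 - 1 : Eisenstein) ≠ 0 := fun h ↦ hu (Units.ext (sub_eq_zero.1 h))
  have hfactor : (u ^ 2 - 1 : Eisenstein) * ((u ^ 2 - ω) * (u ^ 2 - ω ^ 2)) = 0 := by
    linear_combination hcube - (u ^ 2 - 1) * (u ^ 2 + (1 - ω)) * hω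
  rcases mul_eq_zero.1 ((mul_eq_zero_iff_left hu').1 hfactor) with h | h
  · exact ⟨ω, by linear_combination hω + ω * h⟩
  · exact ⟨-ω ^ 2, by linear_combination (1 + ω - ω ^ 2) * hω - ω ^ 2 * h⟩

lemma exists_unit_sq_ne_one (hω : ω ^ 2 + ω + 1 = 0) : ∃ u : Eisensteinˣ, u ^ 2 ≠ 1 := by
  refine ⟨.mkOfMulEqOne ω (ω ^ 2) (by linear_combination (ω - 1) * hω), fun h ↦ ?_⟩
  have h' : ω ^ 2 = 1 := congrArg Units.val h
  have h3 : (3 : Eisenstein) = 0 := by linear_combination (2 - ω) * hω + (ω - 1) * h'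
  norm_num at h3

lemma absNorm_span_two_mul_add_one (hω : ω ^ 2 + ω + 1 = 0) :
    Ideal.absNorm (Ideal.span {2 * ω + 1}) = 3 := by
  let φ : CyclotomicField 3 ℚ →+* ℂ := Classical.arbitrary _
  have h : (Ideal.absNorm (Ideal.span {2 * ω + 1}) : ℝ) ^ 2 = 3 ^ 2 := by
    rw [← norm_sq_eq_absNorm φ, ← norm_pow, ← map_pow, ← map_pow,
      show (2 * ω + 1) ^ 2 = -3 by linear_combination 4 * hω, map_neg, map_neg, norm_neg,
      map_ofNat, map_ofNat, Complex.norm_ofNat]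
  exact_mod_cast (sq_eq_sq₀ (by positivity) (by positivity)).1 h

lemma exists_ker_eq_span (hω : ω ^ 2 + ω + 1 = 0) :
    ∃ f : Eisenstein →+* ZMod 3, RingHom.ker f = Ideal.span {2 * ω + 1} := by
  set I : Ideal Eisenstein := Ideal.span {2 * ω + 1}
  have hcard : Nat.card (Eisenstein ⧸ I) = 3 := absNorm_span_two_mul_add_one hω
  have := Nat.finite_of_card_ne_zero (hcard.trans_ne three_ne_zero)
  have := Fintype.ofFinite (Eisenstein ⧸ I)
  let e := ZMod.ringEquivOfPrime _ Nat.prime_three (Nat.card_eq_fintype_card.symm.trans hcard)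
  exact ⟨(e.symm : _ →+* ZMod 3).comp (Ideal.Quotient.mk I),
    (RingHom.ker_equiv_comp _ e.symm).trans Ideal.mk_ker⟩

/-- The norm-Euclidean structure on `ℤ[ω]`. -/
noncomputable instance euclideanDomain : EuclideanDomain Eisenstein :=
  let φ : CyclotomicField 3 ℚ →+* ℂ := Classical.arbitrary _
  euclideanDomainOfComplexEmbedding (σ := φ.comp (algebraMap Eisenstein _))
    (φ.injective.comp NumberField.RingOfIntegers.coe_injective) (norm_sq_eq_absNorm φ) fun ζ ↦
      have hω := IsCyclotomicExtension.Rat.Three.eta_sq_add_eta_add_one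
        (IsCyclotomicExtension.zeta_spec 3 ℚ (CyclotomicField 3 ℚ))
      (exists_norm_sub_map_sq_lt _ hω ζ).imp fun _ h ↦ h.trans one_half_lt_one

lemma isUnit_of_absNorm_span_eq_one {z : Eisenstein} (h : Ideal.absNorm (Ideal.span {z}) = 1) :
    IsUnit z :=
  Ideal.span_singleton_eq_top.1 (Ideal.absNorm_eq_one_iff.1 h)

lemma eq_zero_of_absNorm_span_eq_zero {z : Eisenstein}
    (h : Ideal.absNorm (Ideal.span {z}) = 0) : z = 0 :=
  Ideal.span_singleton_eq_bot.1 (Ideal.absNorm_eq_zero_iff.1 h)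

lemma T_mem_of_isOfFinOrder_mem (hω : ω ^ 2 + ω + 1 = 0) {N : Subgroup SL(2, Eisenstein)}
    [N.Normal] (hN : -1 ∈ N) {g : SL(2, Eisenstein)} (hg : g ∈ N)
    (hgc : g ∉ Subgroup.center SL(2, Eisenstein)) (hfin : IsOfFinOrder g) {x : Eisenstein}
    (hx : x ∈ Ideal.span {2 * ω + 1}) : T x ∈ N := by
  have hdvd {u : Eisensteinˣ} (hu : u ^ 2 ≠ 1) : ∃ y, x = (1 - u ^ 2) * y :=
    (one_sub_unit_sq_dvd hω hu).trans (Ideal.mem_span_singleton.1 hx)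
  let φ : CyclotomicField 3 ℚ →+* ℂ := Classical.arbitrary _
  obtain ⟨h, hgh, hlt⟩ := exists_isConj_lowerLeft_lt_two (norm_sq_eq_absNorm φ)
    (exists_norm_sub_map_sq_lt (φ.comp (algebraMap Eisenstein _)) hω) hfin
  have hhN : h ∈ N := Group.conjugates_subset_normal hg hgh
  have hhc : h ∉ Subgroup.center SL(2, Eisenstein) := fun h ↦
    hgc (Group.conjugates_subset_normal h hgh.symm)
  obtain h0 | h1 := Nat.le_one_iff_eq_zero_or_eq_one.1 (Nat.lt_succ_iff.1 hlt)
  · obtain ⟨u, z, rfl⟩ := exists_eq_D_mul_T (eq_zero_of_absNorm_span_eq_zero h0)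
    have hu : u ^ 2 ≠ 1 := fun hu ↦ by
      obtain rfl := eq_zero_of_isOfFinOrder_D_mul_T hu (hgh.isOfFinOrder hfin)
      exact hhc (by simpa [T_zero] using D_mem_center hu)
    obtain ⟨y, rfl⟩ := hdvd hu
    exact T_mem_of_D_mul_T_mem hhN y
  · obtain ⟨z, hz⟩ :=
      exists_S_mul_T_mem hN isSquare_or_isSquare_neg hhN (isUnit_of_absNorm_span_eq_one h1)
    obtain ⟨u, hu⟩ := exists_unit_sq_ne_one hω
    have hu4 : (u ^ 2) ^ 2 ≠ 1 := fun h ↦ hu (by simpa [pow_succ _ 2, h] using unit_sq_pow_three u)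
    obtain ⟨y, rfl⟩ := hdvd hu4
    simpa [← pow_mul] using T_mem_of_S_mul_T_mem hz u y

lemma mk_T_mem_of_isOfFinOrder_mem (hω : ω ^ 2 + ω + 1 = 0) {Ω : Subgroup (PSL2 Eisenstein)}
    [Ω.Normal] {x : PSL2 Eisenstein} (hxΩ : x ∈ Ω) (hx1 : x ≠ 1) (hfin : IsOfFinOrder x)
    {y : Eisenstein} (hy : y ∈ Ideal.span {2 * ω + 1}) : (T y : PSL2 Eisenstein) ∈ Ω := by
  obtain ⟨g, rfl⟩ := QuotientGroup.mk_surjective x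
  exact T_mem_of_isOfFinOrder_mem (N := Ω.comap (QuotientGroup.mk' _)) hω (by simp) hxΩ
    (mt (QuotientGroup.eq_one_iff g).2 hx1) (isOfFinOrder_of_mk hfin) hy

lemma mk_T_mem_commutator_of_mem_span (hω : ω ^ 2 + ω + 1 = 0) {x : Eisenstein}
    (hx : x ∈ Ideal.span {2 * ω + 1}) : (T x : PSL2 Eisenstein) ∈ commutator (PSL2 Eisenstein) := by
  obtain ⟨u, hu⟩ := exists_unit_sq_ne_one hω
  obtain ⟨y, rfl⟩ := (one_sub_unit_sq_dvd hω hu).trans (Ideal.mem_span_singleton.1 hx)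
  exact mk_T_mem_commutator u y

lemma index_commutator_dvd_three (hω : ω ^ 2 + ω + 1 = 0) :
    (commutator (PSL2 Eisenstein)).index ∣ 3 := by
  obtain ⟨f, hf⟩ := exists_ker_eq_span hω
  have hT : ∀ x ∈ RingHom.ker f, (T x : PSL2 Eisenstein) ∈ commutator (PSL2 Eisenstein) :=
    fun x hx ↦ mk_T_mem_commutator_of_mem_span hω (hf ▸ hx)
  refine index_dvd_three hT (z := 0) ?_
  rw [T_zero, mul_one]
  exact mk_S_mem_commutator (hT 3 (three_mem_ker f))

end Eisenstein

/-- If `Ω` is a proper normal subgroup of `Γ = PSL(2, ℤ[ω])` containing a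
nontrivial element of finite order, then either `Ω` is the commutator subgroup
of `Γ` (of index 3), or `Ω` has index 12 and is the kernel of reduction modulo
the prime `⟨2ω+1⟩ = ⟨√-3⟩` above 3. -/
theorem normal_subgroup_with_torsion (ω : Eisenstein) (hω : ω ^ 2 + ω + 1 = 0)
    (Ω : Subgroup (PSL2 Eisenstein)) (hn : Ω.Normal) (hproper : Ω ≠ ⊤)
    (x : PSL2 Eisenstein) (hxΩ : x ∈ Ω) (hx1 : x ≠ 1) (hx : IsOfFinOrder x) :
    (Ω = commutator (PSL2 Eisenstein) ∧ Ω.index = 3) ∨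
      (Ω.index = 12 ∧
        Ω = (PSL2Map (Ideal.Quotient.mk
              (Ideal.span ({2 * ω + 1} : Set Eisenstein)))).ker) := by
  obtain ⟨f, hf⟩ := Eisenstein.exists_ker_eq_span hω
  have hT y (hy : y ∈ RingHom.ker f) : (PSL2.T y : PSL2 Eisenstein) ∈ Ω :=
    Eisenstein.mk_T_mem_of_isOfFinOrder_mem hω hxΩ hx1 hx (hf ▸ hy)
  have hle : (PSL2Map f).ker ≤ Ω := PSL2.ker_map_le hT
  rw [PSL2.ker_map_congr (Ideal.mk_ker.trans hf.symm)]
  by_cases hΩ : Ω = (PSL2Map f).ker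
  · exact .inr ⟨hΩ ▸ PSL2.index_ker_map_zmod_three f, hΩ⟩
  · obtain ⟨z, hz⟩ :=
      PSL2.exists_mk_S_mul_T_mem (ZMod.ringHom_surjective f) (by decide) hle hΩ
    have hindex : Ω.index = 3 := (Nat.prime_three.eq_one_or_self_of_dvd _
      (PSL2.index_dvd_three hT hz)).resolve_left (mt Subgroup.index_eq_one.1 hproper)
    exact .inl ⟨eq_commutator_of_index_prime Nat.prime_three hindex
      (Eisenstein.index_commutator_dvd_three hω), hindex⟩
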